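/- Fix r > 1 and ε > 0. Then there is a constant C such that for all B ≥ 3: |#{(u,v) : u, v positive integers, gcd(u,v) = 1, max(u,v) ≤ B, B^(1/r)·u ≤ ε·v} − (3/π²)·ε·B^(2−1/r)| ≤ C·B·(log B)^(2/3)·(log log B)^(4/3). (Sub-critical zoom at the rational point [0:1] of ℙ¹: the limit measure is proportional to Lebesgue measure.) -/

import Mathlib

open Real

/-!
The points to be counted are the primitive integer points of the triangle
`0 < u ≤ δ v ≤ δ B` with `δ = ε / B ^ (1 / r)`. Counting by columns, the full triangle contains
`δ B ^ 2 / 2 - B / 2 + O(δ B + 1 / δ)` integer points, and Möbius inversion extracts the primitive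
ones. The quadratic term produces `3 / π ^ 2 * δ * B ^ 2`. The linear term produces
`B / 2 * ∑ μ(d) / d`, which is `O(B)` because the partial sums of `∑ μ(d) / d` are bounded; a
trivial bound would lose a factor `log B` here. The remaining error is `O(δ B log B + B)`, and
`δ log B` is bounded because `δ` decays like a power of `B`. So the error is `O(B)`, which is
smaller than the bound to be proved.
-/

section MoebiusSums

open Finset
open scoped ArithmeticFunction.Moebius

theorem sum_divisors_moebius (n : ℕ) : ∑ d ∈ n.divisors, μ d = if n = 1 then 1 else 0 := by
  rw [← ArithmeticFunction.coe_mul_zeta_apply, ArithmeticFunction.moebius_mul_coe_zeta,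
    ArithmeticFunction.one_apply]

theorem abs_moebius_cast_le_one (d : ℕ) : |(μ d : ℝ)| ≤ 1 := by
  exact_mod_cast ArithmeticFunction.abs_moebius_le_one

theorem card_filter_coprime_eq_sum_moebius {S : Finset (ℕ × ℕ)} {n : ℕ}
    (hS : ∀ p ∈ S, p.1 ∈ Ioc 0 n) :
    (#{p ∈ S | p.1.Coprime p.2} : ℤ) =
      ∑ d ∈ Ioc 0 n, μ d * #{p ∈ S | d ∣ p.1 ∧ d ∣ p.2} := by
  have indicator_coprime : ∀ p ∈ S, (if p.1.Coprime p.2 then 1 else 0 : ℤ) =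
      ∑ d ∈ Ioc 0 n with d ∣ p.1 ∧ d ∣ p.2, μ d := by
    intro p hp
    obtain ⟨hpos, hle⟩ := mem_Ioc.1 (hS p hp)
    rw [← sum_divisors_moebius]
    refine sum_congr (Finset.ext fun d => ?_) fun _ _ => rfl
    simp only [Nat.mem_divisors, mem_filter, mem_Ioc, Nat.dvd_gcd_iff]
    constructor
    · rintro ⟨hd, -⟩
      exact ⟨⟨Nat.pos_of_dvd_of_pos hd.1 hpos, (Nat.le_of_dvd hpos hd.1).trans hle⟩, hd⟩
    · rintro ⟨-, hd⟩
      exact ⟨hd, (Nat.gcd_pos_of_pos_left _ hpos).ne'⟩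
  simp only [natCast_card_filter, sum_congr rfl indicator_coprime, sum_filter, mul_sum, mul_ite,
    mul_one, mul_zero]
  exact sum_comm

theorem sum_Ioc_moebius_mul_div {n : ℕ} (hn : 0 < n) :
    ∑ d ∈ Ioc 0 n, μ d * ((n / d : ℕ) : ℤ) = 1 := by
  rw [← ArithmeticFunction.sum_Ioc_mul_zeta_eq_sum, ArithmeticFunction.moebius_mul_coe_zeta]
  simp [ArithmeticFunction.one_apply, Nat.one_le_iff_ne_zero, hn.ne']

theorem abs_sum_Ioc_moebius_div_le_two (n : ℕ) : |∑ d ∈ Ioc 0 n, (μ d : ℝ) / d| ≤ 2 := by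
  rcases Nat.eq_zero_or_pos n with rfl | hn
  · simp
  have h_one_le : (1 : ℝ) ≤ n := by exact_mod_cast hn
  have h_floor : ∑ d ∈ Ioc 0 n, (μ d : ℝ) * ((n / d : ℕ) : ℝ) = 1 := by
    simpa only [Int.cast_sum, Int.cast_mul, Int.cast_natCast, Int.cast_one] using
      congrArg (Int.cast : ℤ → ℝ) (sum_Ioc_moebius_mul_div hn)
  have h_error : |n * ∑ d ∈ Ioc 0 n, (μ d : ℝ) / d - 1| ≤ n := by
    calc |n * ∑ d ∈ Ioc 0 n, (μ d : ℝ) / d - 1|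
        = |∑ d ∈ Ioc 0 n, (μ d : ℝ) * (n / d - ((n / d : ℕ) : ℝ))| := by
          rw [← h_floor, mul_sum, ← sum_sub_distrib]
          congr! 2
          ring
      _ ≤ ∑ d ∈ Ioc 0 n, |(μ d : ℝ) * (n / d - ((n / d : ℕ) : ℝ))| := abs_sum_le_sum_abs _ _
      _ ≤ ∑ _ ∈ Ioc 0 n, (1 : ℝ) := by
          refine sum_le_sum fun d _ => ?_
          rw [abs_mul, ← Nat.floor_div_eq_div (K := ℝ)]
          refine mul_le_one₀ (abs_moebius_cast_le_one d) (abs_nonneg _) (abs_le.2 ⟨?_, ?_⟩)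
          · linarith [Nat.floor_le (by positivity : (0 : ℝ) ≤ n / d)]
          · linarith [Nat.lt_floor_add_one ((n : ℝ) / d)]
      _ = n := by simp
  rw [abs_le] at h_error ⊢
  constructor <;> nlinarith

theorem hasSum_moebius_div_sq : HasSum (fun n : ℕ => (μ n : ℝ) / n ^ 2) (6 / π ^ 2) := by
  have one_lt_re_two : (1 : ℝ) < (2 : ℂ).re := by norm_num
  have h_pi : (π : ℂ) ≠ 0 := by exact_mod_cast pi_ne_zero
  have h_value : LSeries (fun n => ((μ n : ℤ) : ℂ)) 2 = ((6 / π ^ 2 : ℝ) : ℂ) := by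
    have h_mul := ArithmeticFunction.LSeries_zeta_mul_Lseries_moebius one_lt_re_two
    rw [ArithmeticFunction.LSeries_zeta_eq_riemannZeta one_lt_re_two, riemannZeta_two] at h_mul
    push_cast
    field_simp at h_mul ⊢
    linear_combination h_mul
  have h_sum := (ArithmeticFunction.LSeriesSummable_moebius_iff.2 one_lt_re_two).LSeriesHasSum
  rw [h_value, LSeriesHasSum] at h_sum
  rw [← Complex.hasSum_ofReal]
  convert h_sum using 2 with n
  rcases eq_or_ne n 0 with rfl | hn
  · simp
  · rw [LSeries.term_of_ne_zero hn]
    norm_cast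

theorem abs_sum_Ioc_moebius_div_sq_sub_le (n : ℕ) :
    |∑ d ∈ Ioc 0 n, (μ d : ℝ) / d ^ 2 - 6 / π ^ 2| ≤ (2 : ℝ) / (n + 1) := by
  refine le_of_tendsto (hasSum_moebius_div_sq.tendsto_sum_nat.const_sub _).abs ?_
  filter_upwards [Filter.eventually_gt_atTop n] with m hm
  have h_split : ∑ d ∈ range m, (μ d : ℝ) / d ^ 2 =
      ∑ d ∈ Ioc 0 n, (μ d : ℝ) / d ^ 2 + ∑ d ∈ Ioo n m, (μ d : ℝ) / d ^ 2 := by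
    have h_disjoint : Disjoint (Ioc 0 n) (Ioo n m) :=
      disjoint_left.2 fun d hd hd' => by simp only [mem_Ioc, mem_Ioo] at hd hd'; lia
    rw [← sum_union h_disjoint]
    refine (sum_subset (fun d hd => ?_) fun d hd hd' => ?_).symm
    · simp only [mem_union, mem_Ioc, mem_Ioo, mem_range] at hd ⊢
      lia
    · simp only [mem_union, mem_Ioc, mem_Ioo, mem_range] at hd hd'
      obtain rfl : d = 0 := by lia
      simp
  rw [h_split, sub_add_cancel_left, abs_neg]
  calc |∑ d ∈ Ioo n m, (μ d : ℝ) / d ^ 2|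
      ≤ ∑ d ∈ Ioo n m, |(μ d : ℝ) / d ^ 2| := abs_sum_le_sum_abs _ _
    _ ≤ ∑ d ∈ Ioo n m, ((d : ℝ) ^ 2)⁻¹ := by
        refine sum_le_sum fun d _ => ?_
        rw [abs_div, abs_of_nonneg (by positivity : (0 : ℝ) ≤ d ^ 2), div_eq_mul_inv]
        exact mul_le_of_le_one_left (by positivity) (abs_moebius_cast_le_one d)
    _ ≤ 2 / (n + 1) := sum_Ioo_inv_sq_le n m

end MoebiusSums

section IntegerPoints

open Finset

theorem abs_card_Icc_ceil_floor_sub_le {a b : ℝ} (ha : 0 ≤ a) (hab : a ≤ b) :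
    |(#(Icc ⌈a⌉₊ ⌊b⌋₊) : ℝ) - (b - a)| ≤ 1 := by
  have h_floor_le := Nat.floor_le (ha.trans hab)
  have h_lt_floor := Nat.lt_floor_add_one b
  have h_le_ceil := Nat.le_ceil a
  have h_ceil_lt := Nat.ceil_lt_add_one ha
  have h_ceil_le : ⌈a⌉₊ ≤ ⌊b⌋₊ + 1 := Nat.ceil_le.2 (by push_cast; linarith)
  rw [Nat.card_Icc, Nat.cast_sub h_ceil_le, abs_le]
  push_cast
  constructor <;> linarith

theorem sum_Ioc_sub_natCast (x : ℝ) (n : ℕ) :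
    ∑ k ∈ Ioc 0 n, (x - k) = x * n - n * (n + 1) / 2 := by
  induction n with
  | zero => simp
  | succ n ih =>
    rw [sum_Ioc_succ_top n.zero_le, ih]
    push_cast
    ring

theorem abs_sum_Ioc_floor_sub_natCast_sub_le {x : ℝ} (hx : 0 ≤ x) :
    |∑ k ∈ Ioc 0 ⌊x⌋₊, (x - k) - (x ^ 2 / 2 - x / 2)| ≤ 1 := by
  have h_floor_le := Nat.floor_le hx
  have h_lt_floor := Nat.lt_floor_add_one x
  have h_fract : x * ⌊x⌋₊ - ⌊x⌋₊ * (⌊x⌋₊ + 1) / 2 - (x ^ 2 / 2 - x / 2) =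
      (x - ⌊x⌋₊) * (1 - (x - ⌊x⌋₊)) / 2 := by ring
  rw [sum_Ioc_sub_natCast, h_fract, abs_le]
  constructor <;> nlinarith

/-- The points with positive integer coordinates of the triangle `0 < u ≤ δ v ≤ δ B`. The bound on
the first coordinate in the ambient box follows from the other conditions and only serves to make
the set finite, see `mem_triangle`. -/
noncomputable def triangle (δ B : ℝ) : Finset (ℕ × ℕ) :=
  {p ∈ Ioc 0 ⌊δ * B⌋₊ ×ˢ Ioc 0 ⌊B⌋₊ | (p.1 : ℝ) ≤ δ * p.2}

variable {δ B : ℝ}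

theorem mem_triangle (hδ : 0 ≤ δ) {p : ℕ × ℕ} :
    p ∈ triangle δ B ↔ 0 < p.1 ∧ 0 < p.2 ∧ (p.2 : ℝ) ≤ B ∧ (p.1 : ℝ) ≤ δ * p.2 := by
  simp only [triangle, mem_filter, mem_product, mem_Ioc]
  constructor
  · rintro ⟨⟨⟨hu, -⟩, hv, hvB⟩, huv⟩
    exact ⟨hu, hv, (Nat.le_floor_iff' hv.ne').1 hvB, huv⟩
  · rintro ⟨hu, hv, hvB, huv⟩
    have huB : (p.1 : ℝ) ≤ δ * B := huv.trans (mul_le_mul_of_nonneg_left hvB hδ)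
    exact ⟨⟨⟨hu, Nat.le_floor huB⟩, hv, Nat.le_floor hvB⟩, huv⟩

theorem card_filter_dvd_triangle (hδ : 0 ≤ δ) {d : ℕ} (hd : 0 < d) :
    #{p ∈ triangle δ B | d ∣ p.1 ∧ d ∣ p.2} = #(triangle δ (B / d)) := by
  have hd' : (0 : ℝ) < d := by exact_mod_cast hd
  have mul_mem_iff (k m : ℕ) : (d * k, d * m) ∈ triangle δ B ↔ (k, m) ∈ triangle δ (B / d) := by
    simp only [mem_triangle hδ, Nat.cast_mul, le_div_iff₀ hd', mul_left_comm δ,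
      mul_le_mul_iff_right₀ hd', mul_comm (m : ℝ) d, Nat.mul_pos_iff_of_pos_left hd]
  symm
  refine card_nbij' (fun p => (d * p.1, d * p.2)) (fun p => (p.1 / d, p.2 / d)) ?_ ?_ ?_ ?_
  · rintro ⟨k, m⟩ hp
    simpa [mul_mem_iff] using hp
  · rintro ⟨u, v⟩ hp
    obtain ⟨hp, ⟨k, rfl⟩, m, rfl⟩ := mem_filter.1 hp
    simpa [hd] using (mul_mem_iff k m).1 hp
  · rintro ⟨k, m⟩ -
    simp [hd]
  · rintro ⟨u, v⟩ hp
    obtain ⟨-, ⟨k, rfl⟩, m, rfl⟩ := mem_filter.1 hp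
    simp [hd]

theorem card_triangle (hδ : 0 < δ) :
    #(triangle δ B) = ∑ u ∈ Ioc 0 ⌊δ * B⌋₊, #(Icc ⌈u / δ⌉₊ ⌊B⌋₊) := by
  rw [triangle, card_filter, sum_product]
  refine sum_congr rfl fun u hu => ?_
  have hu' : (0 : ℝ) < u := by exact_mod_cast (mem_Ioc.1 hu).1
  rw [← card_filter]
  congr 1 with v
  simp only [mem_filter, mem_Ioc, mem_Icc, Nat.ceil_le, div_le_iff₀' hδ]
  constructor
  · rintro ⟨⟨-, hvB⟩, huv⟩
    exact ⟨huv, hvB⟩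
  · rintro ⟨huv, hvB⟩
    have hv : (0 : ℝ) < v := pos_of_mul_pos_right (hu'.trans_le huv) hδ.le
    exact ⟨⟨by exact_mod_cast hv, hvB⟩, huv⟩

theorem abs_card_triangle_sub_le (hδ : 0 < δ) (hB : 0 ≤ B) :
    |(#(triangle δ B) : ℝ) - (δ * B ^ 2 / 2 - B / 2)| ≤ δ * B + 1 / δ := by
  have h_columns : |(#(triangle δ B) : ℝ) - ∑ u ∈ Ioc 0 ⌊δ * B⌋₊, (B - u / δ)| ≤ δ * B := by
    rw [card_triangle hδ, Nat.cast_sum, ← sum_sub_distrib]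
    calc |∑ u ∈ Ioc 0 ⌊δ * B⌋₊, ((#(Icc ⌈u / δ⌉₊ ⌊B⌋₊) : ℝ) - (B - u / δ))|
        ≤ ∑ u ∈ Ioc 0 ⌊δ * B⌋₊, |(#(Icc ⌈u / δ⌉₊ ⌊B⌋₊) : ℝ) - (B - u / δ)| :=
          abs_sum_le_sum_abs _ _
      _ ≤ ∑ _ ∈ Ioc 0 ⌊δ * B⌋₊, (1 : ℝ) := by
          refine sum_le_sum fun _ hu => abs_card_Icc_ceil_floor_sub_le (by positivity) ?_
          obtain ⟨hu, huB⟩ := mem_Ioc.1 hu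
          exact (div_le_iff₀' hδ).2 ((Nat.le_floor_iff' hu.ne').1 huB)
      _ ≤ δ * B := by simpa using Nat.floor_le (by positivity : 0 ≤ δ * B)
  have h_sum : |∑ u ∈ Ioc 0 ⌊δ * B⌋₊, (B - u / δ) - (δ * B ^ 2 / 2 - B / 2)| ≤ 1 / δ := by
    have h_scale : ∑ u ∈ Ioc 0 ⌊δ * B⌋₊, (B - u / δ) - (δ * B ^ 2 / 2 - B / 2) =
        1 / δ * (∑ u ∈ Ioc 0 ⌊δ * B⌋₊, (δ * B - u) - ((δ * B) ^ 2 / 2 - δ * B / 2)) := by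
      rw [mul_sub, mul_sum]
      congr 1
      · refine sum_congr rfl fun u _ => ?_
        field_simp
      · field_simp
    rw [h_scale, abs_mul, abs_of_pos (by positivity : 0 < 1 / δ)]
    exact mul_le_of_le_one_right (by positivity)
      (abs_sum_Ioc_floor_sub_natCast_sub_le (by positivity))
  linarith [abs_sub_le (#(triangle δ B) : ℝ) (∑ u ∈ Ioc 0 ⌊δ * B⌋₊, (B - u / δ))
    (δ * B ^ 2 / 2 - B / 2)]

end IntegerPoints

section PrimitivePoints

open Finset
open scoped ArithmeticFunction.Moebius

variable {δ B : ℝ}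

theorem card_filter_coprime_triangle (hδ : 0 ≤ δ) :
    (#{p ∈ triangle δ B | p.1.Coprime p.2} : ℝ) =
      ∑ d ∈ Ioc 0 ⌊δ * B⌋₊, (μ d : ℝ) * #(triangle δ (B / d)) := by
  have h_fst : ∀ p ∈ triangle δ B, p.1 ∈ Ioc 0 ⌊δ * B⌋₊ := fun p hp =>
    (mem_product.1 (mem_filter.1 hp).1).1
  have h_moebius := congrArg (Int.cast : ℤ → ℝ) (card_filter_coprime_eq_sum_moebius h_fst)
  push_cast at h_moebius
  rw [h_moebius]
  refine sum_congr rfl fun d hd => ?_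
  rw [card_filter_dvd_triangle hδ (mem_Ioc.1 hd).1]

theorem sum_Ioc_floor_one_div_le {x : ℝ} (hx : 0 ≤ x) :
    ∑ d ∈ Ioc 0 ⌊x⌋₊, (1 : ℝ) / d ≤ 1 + log⁺ x := by
  have h_harmonic := harmonic_le_one_add_log ⌊x⌋₊
  rw [harmonic_eq_sum_Icc, ← log_of_nat_eq_posLog] at h_harmonic
  push_cast at h_harmonic
  simp only [one_div]
  exact h_harmonic.trans
    (add_le_add_right (posLog_le_posLog (by positivity) (Nat.floor_le hx)) 1)

theorem abs_card_filter_coprime_triangle_sub_sum_le (hδ : 0 < δ) (hB : 0 ≤ B) :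
    |(#{p ∈ triangle δ B | p.1.Coprime p.2} : ℝ) -
        ∑ d ∈ Ioc 0 ⌊δ * B⌋₊, (μ d : ℝ) * (δ * (B / d) ^ 2 / 2 - B / d / 2)| ≤
      δ * B * (1 + log⁺ (δ * B)) + B := by
  have hδB : 0 ≤ δ * B := by positivity
  rw [card_filter_coprime_triangle hδ.le, ← sum_sub_distrib]
  calc _ ≤ ∑ d ∈ Ioc 0 ⌊δ * B⌋₊, |(μ d : ℝ) * #(triangle δ (B / d)) -
            (μ d : ℝ) * (δ * (B / d) ^ 2 / 2 - B / d / 2)| := abs_sum_le_sum_abs _ _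
    _ ≤ ∑ d ∈ Ioc 0 ⌊δ * B⌋₊, (δ * (B / d) + 1 / δ) := by
        refine sum_le_sum fun d _ => ?_
        rw [← mul_sub, abs_mul]
        exact (mul_le_of_le_one_left (abs_nonneg _) (abs_moebius_cast_le_one d)).trans
          (abs_card_triangle_sub_le hδ (by positivity))
    _ = δ * B * ∑ d ∈ Ioc 0 ⌊δ * B⌋₊, (1 : ℝ) / d + ⌊δ * B⌋₊ / δ := by
        rw [sum_add_distrib, mul_sum]
        congr 1
        · refine sum_congr rfl fun d _ => ?_
          ring
        · simp [div_eq_mul_inv]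
    _ ≤ δ * B * (1 + log⁺ (δ * B)) + B := by
        gcongr
        · exact sum_Ioc_floor_one_div_le hδB
        · exact (div_le_iff₀' hδ).2 (Nat.floor_le hδB)

theorem abs_card_filter_coprime_triangle_sub_le (hδ : 0 < δ) (hB : 0 ≤ B) :
    |(#{p ∈ triangle δ B | p.1.Coprime p.2} : ℝ) - 3 / π ^ 2 * (δ * B ^ 2)| ≤
      δ * B * (1 + log⁺ (δ * B)) + 3 * B := by
  have h_count := abs_card_filter_coprime_triangle_sub_sum_le hδ hB
  set N := ⌊δ * B⌋₊
  have h_split : ∑ d ∈ Ioc 0 N, (μ d : ℝ) * (δ * (B / d) ^ 2 / 2 - B / d / 2) =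
      δ * B ^ 2 / 2 * ∑ d ∈ Ioc 0 N, (μ d : ℝ) / d ^ 2 -
        B / 2 * ∑ d ∈ Ioc 0 N, (μ d : ℝ) / d := by
    rw [mul_sum, mul_sum, ← sum_sub_distrib]
    refine sum_congr rfl fun d _ => ?_
    ring
  have h_quadratic : |δ * B ^ 2 / 2 * (∑ d ∈ Ioc 0 N, (μ d : ℝ) / d ^ 2 - 6 / π ^ 2)| ≤ B := by
    rw [abs_mul, abs_of_nonneg (by positivity)]
    calc δ * B ^ 2 / 2 * |∑ d ∈ Ioc 0 N, (μ d : ℝ) / d ^ 2 - 6 / π ^ 2|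
        ≤ δ * B ^ 2 / 2 * (2 / (N + 1)) := by
          gcongr
          exact abs_sum_Ioc_moebius_div_sq_sub_le N
      _ = B * (δ * B / (N + 1)) := by ring
      _ ≤ B := mul_le_of_le_one_right hB
          ((div_le_one (by positivity)).2 (Nat.lt_floor_add_one _).le)
  have h_linear : |B / 2 * ∑ d ∈ Ioc 0 N, (μ d : ℝ) / d| ≤ B := by
    rw [abs_mul, abs_of_nonneg (by positivity)]
    linarith [mul_le_mul_of_nonneg_left (abs_sum_Ioc_moebius_div_le_two N)
      (by positivity : 0 ≤ B / 2)]
  rw [h_split] at h_count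
  rw [show 3 / π ^ 2 * (δ * B ^ 2) = δ * B ^ 2 / 2 * (6 / π ^ 2) by ring]
  rw [mul_sub] at h_quadratic
  rw [abs_le] at h_count h_quadratic h_linear ⊢
  constructor <;> linarith

end PrimitivePoints

section PointsNear

/-- The rational points `[u : v]` of `ℙ¹` with positive coordinates, of height at most `B` and at
distance at most `δ` from `[0 : 1]`, each encoded by its coprime pair `(u, v)`. -/
def pointsNear (δ B : ℝ) : Set (ℕ × ℕ) :=
  {p | 0 < p.1 ∧ 0 < p.2 ∧ Nat.Coprime p.1 p.2 ∧ ((max p.1 p.2 : ℕ) : ℝ) ≤ B ∧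
    (p.1 : ℝ) ≤ δ * p.2}

variable {δ B : ℝ}

theorem setOf_mul_le_mul_eq_pointsNear {a : ℝ} (ha : 0 < a) (ε B : ℝ) :
    {p : ℕ × ℕ | 0 < p.1 ∧ 0 < p.2 ∧ Nat.Coprime p.1 p.2 ∧ ((max p.1 p.2 : ℕ) : ℝ) ≤ B ∧
      a * (p.1 : ℝ) ≤ ε * (p.2 : ℝ)} = pointsNear (ε / a) B := by
  simp only [pointsNear, div_mul_eq_mul_div, le_div_iff₀' ha]

theorem pointsNear_eq_coe_filter_coprime_triangle (hδ : 0 ≤ δ) (hδ_le : δ ≤ 1) :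
    pointsNear δ B = ({p ∈ triangle δ B | p.1.Coprime p.2} : Finset (ℕ × ℕ)) := by
  ext ⟨u, v⟩
  simp only [pointsNear, Set.mem_ofPred_eq, Finset.coe_filter, mem_triangle hδ]
  have max_eq (huv : (u : ℝ) ≤ δ * v) : max u v = v :=
    max_eq_right (by exact_mod_cast huv.trans (mul_le_of_le_one_left v.cast_nonneg hδ_le))
  constructor
  · rintro ⟨hu, hv, hcop, hB, huv⟩
    exact ⟨⟨hu, hv, max_eq huv ▸ hB, huv⟩, hcop⟩
  · rintro ⟨⟨hu, hv, hB, huv⟩, hcop⟩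
    exact ⟨hu, hv, hcop, (max_eq huv).symm ▸ hB, huv⟩

theorem abs_ncard_pointsNear_sub_le (hδ : 0 < δ) (hδ_le : δ ≤ 1) (hB : 0 ≤ B) :
    |((pointsNear δ B).ncard : ℝ) - 3 / π ^ 2 * (δ * B ^ 2)| ≤
      δ * B * (1 + log⁺ (δ * B)) + 3 * B := by
  rw [pointsNear_eq_coe_filter_coprime_triangle hδ.le hδ_le, Set.ncard_coe_finset]
  exact abs_card_filter_coprime_triangle_sub_le hδ hB

theorem ncard_pointsNear_le_sq (hB : 0 ≤ B) : ((pointsNear δ B).ncard : ℝ) ≤ B ^ 2 := by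
  have h_subset : pointsNear δ B ⊆
      (Finset.Ioc 0 ⌊B⌋₊ ×ˢ Finset.Ioc 0 ⌊B⌋₊ : Finset (ℕ × ℕ)) := by
    rintro ⟨u, v⟩ ⟨hu, hv, -, hB, -⟩
    have h_max : max u v ≤ ⌊B⌋₊ := Nat.le_floor hB
    simp only [Finset.coe_product, Finset.coe_Ioc, Set.mem_prod, Set.mem_Ioc]
    exact ⟨⟨hu, (le_max_left u v).trans h_max⟩, hv, (le_max_right u v).trans h_max⟩
  have h_card := Set.ncard_le_ncard h_subset (Finset.finite_toSet _)
  rw [Set.ncard_coe_finset, Finset.card_product, Nat.card_Ioc, Nat.sub_zero] at h_card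
  calc ((pointsNear δ B).ncard : ℝ) ≤ (⌊B⌋₊ : ℝ) * ⌊B⌋₊ := by exact_mod_cast h_card
    _ ≤ B * B := by gcongr <;> exact Nat.floor_le hB
    _ = B ^ 2 := (sq B).symm

theorem abs_ncard_pointsNear_sub_le_mul_sq (hδ : 0 ≤ δ) (hB : 0 ≤ B) :
    |((pointsNear δ B).ncard : ℝ) - 3 / π ^ 2 * (δ * B ^ 2)| ≤ (1 + δ) * B ^ 2 := by
  have h_const : 3 / π ^ 2 ≤ 1 := (div_le_one (by positivity)).2 (by nlinarith [pi_gt_three])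
  have h_main : 3 / π ^ 2 * (δ * B ^ 2) ≤ δ * B ^ 2 := mul_le_of_le_one_left (by positivity) h_const
  have h_main_nonneg : 0 ≤ 3 / π ^ 2 * (δ * B ^ 2) := by positivity
  have h_ncard := ncard_pointsNear_le_sq (δ := δ) hB
  rw [abs_le]
  constructor <;> linarith [Nat.cast_nonneg (α := ℝ) (pointsNear δ B).ncard]

end PointsNear

section Zoom

variable {r ε B : ℝ}

theorem abs_ncard_pointsNear_div_rpow_sub_le_of_le (hr : 0 < r) (hε : 0 < ε) (hB : 1 ≤ B)
    (hεB : ε ≤ B ^ (1 / r)) :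
    |((pointsNear (ε / B ^ (1 / r)) B).ncard : ℝ) - 3 / π ^ 2 * (ε / B ^ (1 / r) * B ^ 2)| ≤
      (ε * (1 + r) + 3) * B := by
  have hB₀ : 0 < B := by linarith
  have h_rpow : 1 ≤ B ^ (1 / r) := one_le_rpow hB (by positivity)
  have hδ_le : ε / B ^ (1 / r) ≤ 1 := (div_le_one (by positivity)).2 hεB
  have h_posLog : log⁺ (ε / B ^ (1 / r) * B) ≤ r * B ^ (1 / r) := by
    calc log⁺ (ε / B ^ (1 / r) * B) ≤ log⁺ B :=
          posLog_le_posLog (by positivity) (mul_le_of_le_one_left hB₀.le hδ_le)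
      _ = log B := posLog_eq_log (hB.trans (le_abs_self B))
      _ ≤ B ^ (1 / r) / (1 / r) := log_le_rpow_div hB₀.le (by positivity)
      _ = r * B ^ (1 / r) := by field_simp
  calc _ ≤ ε / B ^ (1 / r) * B * (1 + log⁺ (ε / B ^ (1 / r) * B)) + 3 * B :=
        abs_ncard_pointsNear_sub_le (by positivity) hδ_le hB₀.le
    _ ≤ ε / B ^ (1 / r) * B * (B ^ (1 / r) + r * B ^ (1 / r)) + 3 * B := by gcongr
    _ = (ε * (1 + r) + 3) * B := by field_simp

theorem abs_ncard_pointsNear_div_rpow_sub_le_of_ge (hr : 0 < r) (hB : 1 ≤ B)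
    (hεB : B ^ (1 / r) ≤ ε) :
    |((pointsNear (ε / B ^ (1 / r)) B).ncard : ℝ) - 3 / π ^ 2 * (ε / B ^ (1 / r) * B ^ 2)| ≤
      (1 + ε) * ε ^ r * B := by
  have hB₀ : 0 < B := by linarith
  have h_rpow : 1 ≤ B ^ (1 / r) := one_le_rpow hB (by positivity)
  have hε : 0 < ε := by linarith
  have hB_le : B ≤ ε ^ r := by
    simpa [← rpow_mul hB₀.le, hr.ne'] using rpow_le_rpow (by positivity) hεB hr.le
  calc _ ≤ (1 + ε / B ^ (1 / r)) * B ^ 2 :=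
        abs_ncard_pointsNear_sub_le_mul_sq (by positivity) hB₀.le
    _ ≤ (1 + ε) * B ^ 2 := by
        gcongr
        exact div_le_self hε.le h_rpow
    _ = (1 + ε) * B * B := by ring
    _ ≤ (1 + ε) * ε ^ r * B := by gcongr

theorem exists_mul_le_mul_log_rpow_mul_log_log_rpow {a b : ℝ} (ha : 0 ≤ a) (hb : 0 ≤ b) (C : ℝ) :
    ∃ C' : ℝ, ∀ B : ℝ, B ≥ 3 → C * B ≤ C' * B * log B ^ a * log (log B) ^ b := by
  have h_log₃ : 1 < log 3 := by linarith [log_three_gt_d9]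
  have h_loglog₃ : 0 < log (log 3) := log_pos h_log₃
  set c := log 3 ^ a * log (log 3) ^ b
  have hc : 0 < c := by positivity
  refine ⟨|C| / c, fun B hB => ?_⟩
  have h_log : log 3 ≤ log B := log_le_log (by norm_num) hB
  have h_loglog : log (log 3) ≤ log (log B) := log_le_log (by linarith) h_log
  have hc_le : c ≤ log B ^ a * log (log B) ^ b :=
    mul_le_mul (rpow_le_rpow (by linarith) h_log ha) (rpow_le_rpow h_loglog₃.le h_loglog hb)
      (by positivity) (rpow_nonneg (by linarith) a)
  calc C * B ≤ |C| * B := by gcongr; exact le_abs_self C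
    _ = |C| / c * B * c := by field_simp
    _ ≤ |C| / c * B * (log B ^ a * log (log B) ^ b) := by gcongr
    _ = |C| / c * B * log B ^ a * log (log B) ^ b := by ring

end Zoom

theorem stmt_18_general (r ε : ℝ) (hr : 0 < r) (hε : 0 < ε) :
    ∃ C : ℝ, ∀ B : ℝ, B ≥ 1 →
      |(Set.ncard {p : ℕ × ℕ | 0 < p.1 ∧ 0 < p.2 ∧ Nat.Coprime p.1 p.2 ∧
            ((max p.1 p.2 : ℕ) : ℝ) ≤ B ∧ B ^ (1 / r) * (p.1 : ℝ) ≤ ε * (p.2 : ℝ)} : ℝ) -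
          3 / π ^ 2 * ε * B ^ (2 - 1 / r)| ≤ C * B := by
  refine ⟨max (ε * (1 + r) + 3) ((1 + ε) * ε ^ r), fun B hB => ?_⟩
  have hB₀ : 0 < B := by linarith
  have h_main : 3 / π ^ 2 * ε * B ^ (2 - 1 / r) = 3 / π ^ 2 * (ε / B ^ (1 / r) * B ^ 2) := by
    rw [rpow_sub hB₀, rpow_two]
    ring
  rw [setOf_mul_le_mul_eq_pointsNear (by positivity), h_main]
  rcases le_total ε (B ^ (1 / r)) with hεB | hεB
  · refine (abs_ncard_pointsNear_div_rpow_sub_le_of_le hr hε hB hεB).trans ?_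
    gcongr
    exact le_max_left _ _
  · refine (abs_ncard_pointsNear_div_rpow_sub_le_of_ge hr hB hεB).trans ?_
    gcongr
    exact le_max_right _ _

/-- Sub-critical zoom (`r > 1`) at the rational point `Q = [0:1]` of `ℙ¹`:
`#{(u,v) coprime positive, max(u,v) ≤ B, B^(1/r)·u ≤ ε·v}
  = (3/π²)·ε·B^(2−1/r) + O(B·(log B)^(2/3)·(log log B)^(4/3))`. -/
theorem stmt_18 (r ε : ℝ) (hr : 1 < r) (hε : 0 < ε) :
    ∃ C : ℝ, ∀ B : ℝ, B ≥ 3 →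
      |(Set.ncard {p : ℕ × ℕ | 0 < p.1 ∧ 0 < p.2 ∧ Nat.Coprime p.1 p.2 ∧
            ((max p.1 p.2 : ℕ) : ℝ) ≤ B ∧ B ^ (1 / r) * (p.1 : ℝ) ≤ ε * (p.2 : ℝ)} : ℝ) -
          3 / π ^ 2 * ε * B ^ (2 - 1 / r)| ≤
        C * B * Real.log B ^ ((2 : ℝ) / 3) * Real.log (Real.log B) ^ ((4 : ℝ) / 3) := by
  obtain ⟨C, hC⟩ := stmt_18_general r ε (one_pos.trans hr) hε
  obtain ⟨C', hC'⟩ := exists_mul_le_mul_log_rpow_mul_log_log_rpow (a := 2 / 3) (b := 4 / 3)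
    (by norm_num) (by norm_num) C
  exact ⟨C', fun B hB => (hC B (by linarith)).trans (hC' B hB)⟩
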